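/- Let n ≥ 1 and λ = (λ_1,…,λ_n) ∈ P_n, and let f(x) = 2√x, so that M_{kk} = λ_k^{−1/2}, M_{kkk} = −λ_k^{−3/2}/4, c² = 1, and ρ_{ij} = 1/2 for all i < j (with ρ_{ij} defined as −(f'(λ_i) − f'(λ_j))/(f'(λ_i) f'(λ_j)(f(λ_i) − f(λ_j))) if λ_i ≠ λ_j and −f''(λ_i)/f'(λ_i)³ if λ_i = λ_j). Then the complex scalar-curvature expression Σ_{i≠k} 4 (M_{iii} M_{kkk}/(M_{ii}³ M_{kk}³))(1 − 1/M_{ii}² − 1/M_{kk}²) − 8 ( Σ_{k=1}^{n} (M_{kkk}/M_{kk}³)(1 − 1/M_{kk}²) )( Σ_{1≤i<j≤n} ρ_{ij} ) + 4 ( Σ_{1≤i<j≤n} ρ_{ij} )² − 2 Σ_{1≤i<j≤n} ρ_{ij}² equals d(d−1)/4 with d = n² − 1. (The Wigner–Yanase metric maps the complex state space onto a piece of the Euclidean sphere of radius 2 and dimension d = n² − 1, whose scalar curvature is d(d−1)/4.) -/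

import Mathlib

open Finset

theorem deriv_two_mul_sqrt {x : ℝ} (hx : 0 < x) :
    deriv (fun x => 2 * Real.sqrt x) x = (Real.sqrt x)⁻¹ := by
  rw [((Real.hasDerivAt_sqrt hx.ne').const_mul 2).deriv]
  field_simp

theorem deriv_deriv_two_mul_sqrt {x : ℝ} (hx : 0 < x) :
    deriv (deriv (fun x => 2 * Real.sqrt x)) x = -(1 / 2) * ((Real.sqrt x)⁻¹) ^ 3 := by
  have h : deriv (fun x => 2 * Real.sqrt x) =ᶠ[nhds x] fun y => (Real.sqrt y)⁻¹ := by
    filter_upwards [lt_mem_nhds hx] with y hy using deriv_two_mul_sqrt hy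
  have hs : Real.sqrt x ≠ 0 := (Real.sqrt_pos.2 hx).ne'
  rw [h.deriv_eq, ((Real.hasDerivAt_sqrt hx.ne').fun_inv hs).deriv]
  field_simp

theorem sum_ite_lt_const (n : ℕ) (c : ℝ) :
    (∑ i : Fin n, ∑ j : Fin n, if i < j then c else 0) = c * (n * (n - 1) / 2) := by
  have hswap : (∑ i : Fin n, ∑ j : Fin n, if j < i then c else 0)
      = ∑ i : Fin n, ∑ j : Fin n, if i < j then c else 0 := Finset.sum_comm
  have htri : (∑ i : Fin n, ∑ j : Fin n, if i < j then c else 0)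
      + (∑ i : Fin n, ∑ j : Fin n, if j < i then c else 0)
      + (∑ i : Fin n, ∑ j : Fin n, if i = j then c else 0)
      = ∑ _i : Fin n, ∑ _j : Fin n, c := by
    simp only [← Finset.sum_add_distrib]
    refine Finset.sum_congr rfl fun i _ => Finset.sum_congr rfl fun j _ => ?_
    rcases lt_trichotomy i j with h | h | h
    · simp [h, h.not_gt, h.ne]
    · simp [h]
    · simp [h, h.not_gt, h.ne']
  rw [hswap] at htri
  simp only [Finset.sum_ite_eq, Finset.mem_univ, if_true, Finset.sum_const, Finset.card_univ,
    Fintype.card_fin, nsmul_eq_mul] at htri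
  linarith

theorem sum_ite_ne_one_sub_sub (n : ℕ) (x : Fin n → ℝ) (hx : ∑ k, x k = 1) (c : ℝ) :
    (∑ i : Fin n, ∑ k : Fin n, if i ≠ k then c * (1 - x i - x k) else 0)
      = c * ((n - 1) * (n - 2)) := by
  have h (i k : Fin n) : (if i ≠ k then c * (1 - x i - x k) else 0)
      = c * (1 - x i - x k) - if i = k then c * (1 - x i - x k) else 0 := by
    by_cases hik : i = k <;> simp [hik]
  simp only [h, Finset.sum_sub_distrib, Finset.sum_ite_eq, Finset.mem_univ, if_true,
    ← Finset.mul_sum, Finset.sum_const, Finset.card_univ, Fintype.card_fin, nsmul_eq_mul, hx]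
  ring

/-- For the Wigner–Yanase function f(x) = 2√x and λ ∈ P_n, the complex
scalar-curvature expression equals d(d−1)/4 with d = n² − 1. -/
theorem stmt_14 (n : ℕ) (hn : 1 ≤ n) (lam : Fin n → ℝ) (hpos : ∀ k, 0 < lam k)
    (hsum : ∑ k, lam k = 1)
    (f : ℝ → ℝ) (hf : f = fun x => 2 * Real.sqrt x)
    (Mkk : Fin n → ℝ) (hMkk : ∀ k, Mkk k = deriv f (lam k))
    (Mkkk : Fin n → ℝ) (hMkkk : ∀ k, Mkkk k = deriv (deriv f) (lam k) / 2)
    (ρ : Fin n → Fin n → ℝ)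
    (hρ : ∀ i j, ρ i j =
      if lam i = lam j then -(deriv (deriv f) (lam i) / (deriv f (lam i)) ^ 3)
      else -((deriv f (lam i) - deriv f (lam j)) /
        (deriv f (lam i) * deriv f (lam j) * (f (lam i) - f (lam j)))))
    (d : ℝ) (hd : d = (n : ℝ) ^ 2 - 1) :
    (∑ i : Fin n, ∑ k : Fin n,
        (if i ≠ k then
          4 * (Mkkk i * Mkkk k / (Mkk i ^ 3 * Mkk k ^ 3)) *
            (1 - 1 / Mkk i ^ 2 - 1 / Mkk k ^ 2)
        else 0))
      - 8 * (∑ k, Mkkk k / Mkk k ^ 3 * (1 - 1 / Mkk k ^ 2)) *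
          (∑ i : Fin n, ∑ j : Fin n, if i < j then ρ i j else 0)
      + 4 * (∑ i : Fin n, ∑ j : Fin n, if i < j then ρ i j else 0) ^ 2
      - 2 * (∑ i : Fin n, ∑ j : Fin n, if i < j then ρ i j ^ 2 else 0)
      = d * (d - 1) / 4 := by
  have hs (k) : 0 < Real.sqrt (lam k) := Real.sqrt_pos.2 (hpos k)
  have hM (k) : Mkk k = (Real.sqrt (lam k))⁻¹ := by
    rw [hMkk, hf, deriv_two_mul_sqrt (hpos k)]
  have hM2 (k) : 1 / Mkk k ^ 2 = lam k := by
    rw [hM, inv_pow, one_div, inv_inv, Real.sq_sqrt (hpos k).le]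
  have hM0 (k) : Mkk k ≠ 0 := by
    rw [hM]
    exact (inv_pos.2 (hs k)).ne'
  have hM3 (k) : Mkkk k = -(1 / 4) * Mkk k ^ 3 := by
    rw [hMkkk, hf, deriv_deriv_two_mul_sqrt (hpos k), hM]
    ring
  have hquot (k) : Mkkk k / Mkk k ^ 3 = -(1 / 4) := by
    rw [hM3, mul_div_cancel_right₀ _ (pow_ne_zero 3 (hM0 k))]
  have hquot2 (i k) : 4 * (Mkkk i * Mkkk k / (Mkk i ^ 3 * Mkk k ^ 3)) = 1 / 4 := by
    rw [mul_div_mul_comm, hquot, hquot]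
    norm_num
  have hρ' (i j) : ρ i j = 1 / 2 := by
    rw [hρ, hf, deriv_two_mul_sqrt (hpos i), deriv_two_mul_sqrt (hpos j),
      deriv_deriv_two_mul_sqrt (hpos i)]
    have hi := (hs i).ne'
    have hj := (hs j).ne'
    split_ifs with h
    · field_simp
    · have hij : Real.sqrt (lam i) - Real.sqrt (lam j) ≠ 0 := fun h0 =>
        h ((Real.sqrt_inj (hpos i).le (hpos j).le).1 (sub_eq_zero.1 h0))
      rw [← mul_sub]
      field_simp
      ring
  simp only [hquot, hquot2, hM2, hρ', sum_ite_lt_const, sum_ite_ne_one_sub_sub n lam hsum,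
    ← Finset.mul_sum, Finset.sum_sub_distrib, Finset.sum_const, Finset.card_univ,
    Fintype.card_fin, nsmul_eq_mul, hsum, hd]
  ring
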